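/- Let Λ ⊂ ℂ^d be a full-rank lattice, σ > 0, A ∈ ℂ^{d×d}, and t ∈ ℂ^d. Then ∑_{x∈Λ} exp(−‖x‖²/σ² + Re(t†Ax)) ≤ exp(σ²‖A†t‖²/4) · ∑_{x∈Λ} exp(−‖x‖²/σ²). (Equivalently, if x is sampled from the discrete Gaussian D_{Λ,σ} with probabilities proportional to exp(−‖x‖²/σ²), then the moment generating function satisfies E[exp(Re(t†Ax))] ≤ exp((σ²/4)‖A†t‖²).) -/

import Mathlib

open Matrix

/-
By completing the square, the moment generating sum is `exp (σ² ‖v‖² / 4)` times the Gaussian mass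
`f c = ∑ exp (-‖x - c‖² / σ²)` of a translate of the lattice, so the point is that `f` is maximal at
`c = 0`. The parallelogram law and the change of variables `(x, y) ↦ (x + y, x - y)`, whose image
consists of the pairs congruent modulo `2L`, turn `f c ^ 2`, `f (2c) * f 0` and `f 0 ^ 2` into sums
over `r ∈ L / 2L` of `p r * q r`, `p r ^ 2` and `q r ^ 2`, where `p r` and `q r` are the masses,
with `σ²` doubled, of the class `r` translated by `2c` and by `0`. Hence
`2 * f c ^ 2 ≤ f (2c) * f 0 + f 0 ^ 2`. Now `f` is bounded: it is `L`-periodic, and projecting `c`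
orthogonally onto the real span of `L` does not decrease it. So `S = sup f` satisfies
`2 * S ^ 2 ≤ S * f 0 + f 0 ^ 2`, which forces `S = f 0`.
-/

section ParityClass

variable {G : Type*} [AddCommGroup G]

/-- The subgroup `2G`; its cosets are the parity classes of `G`. -/
abbrev doubleSubgroup (G : Type*) [AddCommGroup G] : AddSubgroup G :=
  (nsmulAddMonoidHom (α := G) 2).range

/-- The elements of `G` in a given class modulo `2G`. -/
abbrev ParityClass (r : G ⧸ doubleSubgroup G) : Type _ :=
  {x : G // (x : G ⧸ doubleSubgroup G) = r}

theorem mk_doubleSubgroup_eq_iff {a b : G} :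
    (a : G ⧸ doubleSubgroup G) = b ↔ ∃ y, a = b + y + y := by
  rw [eq_comm, QuotientAddGroup.eq, AddMonoidHom.mem_range]
  simp only [nsmulAddMonoidHom_apply, two_nsmul, neg_add_eq_sub, eq_sub_iff_add_eq', add_assoc,
    eq_comm]

theorem add_sub_injective [IsAddTorsionFree G] :
    Function.Injective fun z : G × G => (z.1 + z.2, z.1 - z.2) := by
  rintro ⟨a, b⟩ ⟨c, d⟩ h
  obtain ⟨hadd, hsub⟩ := Prod.mk.inj h
  have hac : a = c := nsmul_right_injective two_ne_zero <| by
    calc 2 • a = (a + b) + (a - b) := by abel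
      _ = (c + d) + (c - d) := by rw [hadd, hsub]
      _ = 2 • c := by abel
  subst hac
  exact Prod.ext rfl (add_left_cancel hadd)

/-- The change of variables `(x, y) ↦ (x + y, x - y)` as a bijection from `G × G` onto the pairs
congruent modulo `2G`, sorted by their common class. -/
noncomputable def addSubEquiv (G : Type*) [AddCommGroup G] [IsAddTorsionFree G] :
    G × G ≃ Σ r : G ⧸ doubleSubgroup G, ParityClass r × ParityClass r :=
  Equiv.ofBijective
    (fun z => ⟨_, ⟨z.1 + z.2, rfl⟩,
      ⟨z.1 - z.2, mk_doubleSubgroup_eq_iff.2 ⟨-z.2, by abel⟩⟩⟩) <| by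
    constructor
    · exact .of_comp (f := fun s => ((s.2.1 : G), (s.2.2 : G))) add_sub_injective
    · rintro ⟨_, ⟨p, rfl⟩, ⟨q, hq⟩⟩
      obtain ⟨y, rfl⟩ := mk_doubleSubgroup_eq_iff.1 hq.symm
      refine ⟨(q + y, y), ?_⟩
      simp

theorem hasSum_tsum_parityClass_mul_tsum [IsAddTorsionFree G] {R : Type*} [NormedRing R]
    [CompleteSpace R] {u v : G → R} (hu : Summable fun x => ‖u x‖) (hv : Summable fun x => ‖v x‖) :
    HasSum (fun r : G ⧸ doubleSubgroup G =>
        (∑' x : ParityClass r, u x) * ∑' x : ParityClass r, v x)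
      (∑' z : G × G, u (z.1 + z.2) * v (z.1 - z.2)) := by
  have hsum : Summable fun z : G × G => u (z.1 + z.2) * v (z.1 - z.2) :=
    (summable_mul_of_summable_norm hu hv).comp_injective
      (i := fun z : G × G => (z.1 + z.2, z.1 - z.2)) add_sub_injective
  let F (s : Σ r : G ⧸ doubleSubgroup G, ParityClass r × ParityClass r) : R := u s.2.1 * v s.2.2
  have hF : HasSum F (∑' z : G × G, u (z.1 + z.2) * v (z.1 - z.2)) :=
    (addSubEquiv G).hasSum_iff.1 hsum.hasSum
  refine hF.sigma fun r => ?_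
  have hur : Summable fun x : ParityClass r => ‖u x‖ := hu.subtype _
  have hvr : Summable fun x : ParityClass r => ‖v x‖ := hv.subtype _
  rw [tsum_mul_tsum_of_summable_norm hur hvr]
  exact (summable_mul_of_summable_norm hur hvr).hasSum

end ParityClass

/-- The unnormalized Gaussian density `exp (-‖x‖² / s)`, where `s` plays the role of `σ²`. -/
noncomputable def gaussianWeight {E : Type*} [Norm E] (s : ℝ) (x : E) : ℝ :=
  Real.exp (-‖x‖ ^ 2 / s)

/-- The Gaussian mass of the translate `L - c` of a lattice `L`. -/
noncomputable def gaussianSum {E : Type*} [NormedAddCommGroup E] (L : Submodule ℤ E) (s : ℝ)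
    (c : E) : ℝ :=
  ∑' x : L, gaussianWeight s ((x : E) - c)

section NormedAddCommGroup

variable {E : Type*} [NormedAddCommGroup E]

theorem gaussianWeight_nonneg (s : ℝ) (x : E) : 0 ≤ gaussianWeight s x :=
  (Real.exp_pos _).le

theorem gaussianSum_nonneg (L : Submodule ℤ E) (s : ℝ) (c : E) : 0 ≤ gaussianSum L s c :=
  tsum_nonneg fun _ => gaussianWeight_nonneg _ _

theorem gaussianSum_sub_mem (L : Submodule ℤ E) (s : ℝ) (c : E) {l : E} (hl : l ∈ L) :
    gaussianSum L s (c - l) = gaussianSum L s c := by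
  rw [gaussianSum, ← (Equiv.subRight (⟨l, hl⟩ : L)).tsum_eq]
  simp only [Equiv.subRight_apply, AddSubgroupClass.coe_sub, sub_sub_sub_cancel_right]
  rfl

theorem gaussianWeight_sub_le {s : ℝ} (hs : 0 < s) (x c : E) :
    gaussianWeight s (x - c) ≤ Real.exp (‖c‖ ^ 2 / s) * gaussianWeight (2 * s) x := by
  have hx : ‖x‖ ^ 2 ≤ 2 * (‖x - c‖ ^ 2 + ‖c‖ ^ 2) :=
    calc ‖x‖ ^ 2 = ‖(x - c) + c‖ ^ 2 := by rw [sub_add_cancel]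
      _ ≤ (‖x - c‖ + ‖c‖) ^ 2 := by gcongr; exact norm_add_le _ _
      _ ≤ 2 * (‖x - c‖ ^ 2 + ‖c‖ ^ 2) := add_sq_le
  rw [gaussianWeight, gaussianWeight, ← Real.exp_add, Real.exp_le_exp]
  calc -‖x - c‖ ^ 2 / s ≤ (‖c‖ ^ 2 - ‖x‖ ^ 2 / 2) / s := by gcongr; linarith
    _ = ‖c‖ ^ 2 / s + -‖x‖ ^ 2 / (2 * s) := by field_simp; ring

end NormedAddCommGroup

section NormedSpace

variable {E : Type*} [NormedAddCommGroup E] [NormedSpace ℝ E] [FiniteDimensional ℝ E]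

theorem exists_mem_norm_sub_le_of_mem_span (L : Submodule ℤ E) :
    ∃ R, ∀ c ∈ Submodule.span ℝ (L : Set E), ∃ l ∈ L, ‖c - l‖ ≤ R := by
  obtain ⟨B, hBL, hspan⟩ := (Submodule.fg_span_iff_fg_span_finset_subset (L : Set E)).1
    (IsNoetherian.noetherian (Submodule.span ℝ (L : Set E)))
  refine ⟨∑ b ∈ B, ‖b‖, fun c hc => ?_⟩
  rw [hspan, Submodule.mem_span_finset] at hc
  obtain ⟨a, -, rfl⟩ := hc
  refine ⟨∑ b ∈ B, ⌊a b⌋ • b, L.sum_mem fun b hb => L.smul_mem _ (hBL hb), ?_⟩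
  calc ‖∑ b ∈ B, a b • b - ∑ b ∈ B, ⌊a b⌋ • b‖ = ‖∑ b ∈ B, Int.fract (a b) • b‖ := by
        simp only [← Finset.sum_sub_distrib, Int.fract, sub_smul, Int.cast_smul_eq_zsmul]
    _ ≤ ∑ b ∈ B, ‖b‖ := norm_sum_le_of_le B fun b _ => by
        rw [norm_smul, Real.norm_of_nonneg (Int.fract_nonneg _)]
        exact mul_le_of_le_one_left (norm_nonneg b) (Int.fract_lt_one _).le

variable (L : Submodule ℤ E) [DiscreteTopology L] {s : ℝ}

theorem summable_gaussianWeight (hs : 0 < s) : Summable fun x : L => gaussianWeight s (x : E) := by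
  set n := Module.finrank ℤ L + 1
  have hpow : Summable fun x : L => s ^ n * n.factorial * ‖x‖⁻¹ ^ (2 * n) :=
    (ZLattice.summable_norm_pow_inv L (2 * n) (by omega)).mul_left _
  refine hpow.of_norm_bounded_eventually ((Filter.eventually_cofinite_ne 0).mono fun x hx => ?_)
  have hx_pos : 0 < ‖(x : E)‖ := by simpa using hx
  have hexp := Real.pow_div_factorial_le_exp (‖(x : E)‖ ^ 2 / s) (by positivity) n
  calc ‖gaussianWeight s (x : E)‖ = (Real.exp (‖(x : E)‖ ^ 2 / s))⁻¹ := by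
        rw [Real.norm_of_nonneg (gaussianWeight_nonneg _ _), gaussianWeight, neg_div, Real.exp_neg]
    _ ≤ ((‖(x : E)‖ ^ 2 / s) ^ n / n.factorial)⁻¹ := inv_anti₀ (by positivity) hexp
    _ = s ^ n * n.factorial * ‖x‖⁻¹ ^ (2 * n) := by
        rw [Submodule.coe_norm, div_pow, ← pow_mul, inv_pow]
        field_simp

theorem summable_gaussianWeight_sub (hs : 0 < s) (c : E) :
    Summable fun x : L => gaussianWeight s ((x : E) - c) :=
  Summable.of_nonneg_of_le (fun _ => gaussianWeight_nonneg _ _)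
    (fun x => gaussianWeight_sub_le hs (x : E) c)
    ((summable_gaussianWeight L (by positivity : 0 < 2 * s)).mul_left _)

theorem gaussianSum_le_exp_mul (hs : 0 < s) (c : E) :
    gaussianSum L s c ≤ Real.exp (‖c‖ ^ 2 / s) * gaussianSum L (2 * s) 0 := by
  simp only [gaussianSum, sub_zero, ← tsum_mul_left]
  exact (summable_gaussianWeight_sub L hs c).tsum_le_tsum
    (fun x => gaussianWeight_sub_le hs (x : E) c)
    ((summable_gaussianWeight L (by positivity : 0 < 2 * s)).mul_left _)

theorem exists_gaussianSum_le_of_mem_span (hs : 0 < s) :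
    ∃ M, ∀ c ∈ Submodule.span ℝ (L : Set E), gaussianSum L s c ≤ M := by
  obtain ⟨R, hR⟩ := exists_mem_norm_sub_le_of_mem_span L
  refine ⟨Real.exp (R ^ 2 / s) * gaussianSum L (2 * s) 0, fun c hc => ?_⟩
  obtain ⟨l, hl, hcl⟩ := hR c hc
  calc gaussianSum L s c = gaussianSum L s (c - l) := (gaussianSum_sub_mem L s c hl).symm
    _ ≤ Real.exp (‖c - l‖ ^ 2 / s) * gaussianSum L (2 * s) 0 := gaussianSum_le_exp_mul L hs _
    _ ≤ Real.exp (R ^ 2 / s) * gaussianSum L (2 * s) 0 := by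
        gcongr
        exact gaussianSum_nonneg _ _ _

end NormedSpace

section InnerProductSpace

open scoped RealInnerProductSpace

variable {E : Type*} [NormedAddCommGroup E] [InnerProductSpace ℝ E]

theorem gaussianWeight_mul_gaussianWeight (s : ℝ) (x y : E) :
    gaussianWeight s x * gaussianWeight s y =
      gaussianWeight (2 * s) (x + y) * gaussianWeight (2 * s) (x - y) := by
  simp only [gaussianWeight, ← Real.exp_add, ← add_div, ← neg_add]
  rw [parallelogram_law_with_norm ℝ, ← mul_neg, mul_div_mul_left _ _ two_ne_zero]

theorem exp_neg_norm_sq_div_add_inner {s : ℝ} (hs : s ≠ 0) (v x : E) :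
    Real.exp (-‖x‖ ^ 2 / s + ⟪v, x⟫) =
      Real.exp (s * ‖v‖ ^ 2 / 4) * gaussianWeight s (x - (s / 2) • v) := by
  rw [gaussianWeight, ← Real.exp_add, norm_sub_sq_real, inner_smul_right, norm_smul, mul_pow,
    Real.norm_eq_abs, sq_abs, real_inner_comm]
  congr 1
  field_simp
  ring

variable [FiniteDimensional ℝ E] (L : Submodule ℤ E) [DiscreteTopology L] {s : ℝ}

theorem gaussianSum_le_gaussianSum_starProjection (hs : 0 < s) (c : E) :
    gaussianSum L s c ≤
      gaussianSum L s ((Submodule.span ℝ (L : Set E)).starProjection c) := by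
  set V := Submodule.span ℝ (L : Set E)
  refine (summable_gaussianWeight_sub L hs c).tsum_le_tsum (fun x => ?_)
    (summable_gaussianWeight_sub L hs _)
  have hx : V.starProjection (x : E) = x :=
    Submodule.starProjection_eq_self_iff.2 (Submodule.subset_span x.2)
  have hnorm : ‖(x : E) - V.starProjection c‖ ≤ ‖(x : E) - c‖ := by
    simpa only [map_sub, hx] using V.norm_starProjection_apply_le ((x : E) - c)
  unfold gaussianWeight
  gcongr

theorem bddAbove_range_gaussianSum (hs : 0 < s) : BddAbove (Set.range (gaussianSum L s)) := by
  obtain ⟨M, hM⟩ := exists_gaussianSum_le_of_mem_span L hs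
  refine ⟨M, ?_⟩
  rintro _ ⟨c, rfl⟩
  exact (gaussianSum_le_gaussianSum_starProjection L hs c).trans
    (hM _ (Submodule.starProjection_apply_mem _ c))

theorem gaussianSum_mul_gaussianSum (hs : 0 < s) (a b : E) :
    gaussianSum L s a * gaussianSum L s b =
      ∑' z : L × L, gaussianWeight (2 * s) (((z.1 + z.2 : L) : E) - (a + b)) *
        gaussianWeight (2 * s) (((z.1 - z.2 : L) : E) - (a - b)) := by
  rw [gaussianSum, gaussianSum, tsum_mul_tsum_of_summable_norm
    (summable_gaussianWeight_sub L hs a).norm (summable_gaussianWeight_sub L hs b).norm]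
  refine tsum_congr fun z => ?_
  rw [gaussianWeight_mul_gaussianWeight, Submodule.coe_add, Submodule.coe_sub, add_sub_add_comm,
    sub_sub_sub_comm]

theorem two_mul_gaussianSum_sq_le (hs : 0 < s) (c : E) :
    2 * gaussianSum L s c ^ 2 ≤
      gaussianSum L s ((2 : ℝ) • c) * gaussianSum L s 0 + gaussianSum L s 0 ^ 2 := by
  have : IsAddTorsionFree E := .of_isTorsionFree ℝ E
  have : IsAddTorsionFree L := .of_isTorsionFree ℤ L
  let p (a : E) (r : L ⧸ doubleSubgroup L) : ℝ :=
    ∑' x : ParityClass r, gaussianWeight (2 * s) ((x.1 : E) - a)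
  have hasSum_p (a b : E) :
      HasSum (fun r => p (a + b) r * p (a - b) r) (gaussianSum L s a * gaussianSum L s b) := by
    have hsum (a : E) := (summable_gaussianWeight_sub L (by positivity : 0 < 2 * s) a).norm
    rw [gaussianSum_mul_gaussianSum L hs]
    exact hasSum_tsum_parityClass_mul_tsum (hsum _) (hsum _)
  have hcc := hasSum_p c c
  have h2c0 := hasSum_p ((2 : ℝ) • c) 0
  have h00 := hasSum_p 0 0
  simp only [← two_smul ℝ c, sub_self, add_zero, sub_zero] at hcc h2c0 h00
  rw [sq, sq]
  refine hasSum_le (fun r => ?_) (hcc.mul_left 2) (h2c0.add h00)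
  linarith [two_mul_le_add_sq (p ((2 : ℝ) • c) r) (p 0 r)]

theorem gaussianSum_le_gaussianSum_zero (hs : 0 < s) (c : E) :
    gaussianSum L s c ≤ gaussianSum L s 0 := by
  set f := gaussianSum L s
  set S := ⨆ c, f c
  have hfS (c : E) : f c ≤ S := le_ciSup (bddAbove_range_gaussianSum L hs) c
  have hf0 : 0 ≤ f 0 := gaussianSum_nonneg L s 0
  have hS : 0 ≤ S := hf0.trans (hfS 0)
  have hf_sqrt (c : E) : f c ≤ √((S * f 0 + f 0 ^ 2) / 2) := by
    apply Real.le_sqrt_of_sq_le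
    have := two_mul_gaussianSum_sq_le L hs c
    have := mul_le_mul_of_nonneg_right (hfS ((2 : ℝ) • c)) hf0
    linarith
  have hS_sq : S ^ 2 ≤ (S * f 0 + f 0 ^ 2) / 2 :=
    (Real.le_sqrt hS (by positivity)).1 (ciSup_le hf_sqrt)
  have hS_le : S ≤ f 0 := by
    by_contra! hlt
    have hprod : 0 < (S - f 0) * (2 * S + f 0) := mul_pos (by linarith) (by linarith)
    linarith
  exact (hfS c).trans hS_le

theorem discreteGaussian_mgf_bound_general {σ : ℝ} (hσ : σ ≠ 0) (v : E) :
    ∑' x : L, Real.exp (-‖(x : E)‖ ^ 2 / σ ^ 2 + ⟪v, (x : E)⟫) ≤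
      Real.exp (σ ^ 2 * ‖v‖ ^ 2 / 4) * ∑' x : L, Real.exp (-‖(x : E)‖ ^ 2 / σ ^ 2) := by
  have hs : 0 < σ ^ 2 := by positivity
  calc ∑' x : L, Real.exp (-‖(x : E)‖ ^ 2 / σ ^ 2 + ⟪v, (x : E)⟫)
      = Real.exp (σ ^ 2 * ‖v‖ ^ 2 / 4) * gaussianSum L (σ ^ 2) ((σ ^ 2 / 2) • v) := by
        simp only [exp_neg_norm_sq_div_add_inner hs.ne', tsum_mul_left, gaussianSum]
    _ ≤ Real.exp (σ ^ 2 * ‖v‖ ^ 2 / 4) * gaussianSum L (σ ^ 2) 0 := by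
        gcongr
        exact gaussianSum_le_gaussianSum_zero L hs _
    _ = Real.exp (σ ^ 2 * ‖v‖ ^ 2 / 4) * ∑' x : L, Real.exp (-‖(x : E)‖ ^ 2 / σ ^ 2) := by
        simp only [gaussianSum, gaussianWeight, sub_zero]

end InnerProductSpace

theorem re_star_dotProduct_mulVec {m n : Type*} [Fintype m] [Fintype n] (A : Matrix m n ℂ)
    (t : EuclideanSpace ℂ m) (x : EuclideanSpace ℂ n) :
    (star (t : m → ℂ) ⬝ᵥ A *ᵥ (x : n → ℂ)).re =
      inner ℝ ((WithLp.equiv 2 (n → ℂ)).symm (Aᴴ *ᵥ (t : m → ℂ))) x := by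
  have hdot : star (t : m → ℂ) ⬝ᵥ A *ᵥ (x : n → ℂ) = star (Aᴴ *ᵥ (t : m → ℂ)) ⬝ᵥ (x : n → ℂ) := by
    rw [star_mulVec, conjTranspose_conjTranspose, dotProduct_mulVec]
  rw [hdot, dotProduct, Complex.re_sum, PiLp.inner_apply]
  refine Finset.sum_congr rfl fun i _ => ?_
  rw [Complex.inner, mul_comm]
  rfl

/-- **MGF bound for the discrete Gaussian on a complex lattice.**
For a full-rank lattice `Λ ⊂ ℂ^d`, `σ > 0`, `A ∈ ℂ^{d×d}` and `t ∈ ℂ^d`,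
`∑_{x∈Λ} exp(−‖x‖²/σ² + Re(t†Ax)) ≤ exp(σ²‖A†t‖²/4) · ∑_{x∈Λ} exp(−‖x‖²/σ²)`;
i.e. if `x ∼ D_{Λ,σ}` then `E[exp(Re(t†Ax))] ≤ exp((σ²/4)‖A†t‖²)`. -/
theorem discreteGaussian_mgf_bound
    (d : ℕ)
    (L : Submodule ℤ (EuclideanSpace ℂ (Fin d))) [DiscreteTopology L]
    (hfull : Submodule.span ℝ (L : Set (EuclideanSpace ℂ (Fin d))) = ⊤)
    (σ : ℝ) (hσ : 0 < σ)
    (A : Matrix (Fin d) (Fin d) ℂ) (t : EuclideanSpace ℂ (Fin d)) :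
    (∑' x : L, Real.exp (-‖(x : EuclideanSpace ℂ (Fin d))‖ ^ 2 / σ ^ 2 +
        (star (t : Fin d → ℂ) ⬝ᵥ A *ᵥ ((x : EuclideanSpace ℂ (Fin d)) : Fin d → ℂ)).re)) ≤
      Real.exp (σ ^ 2 * ‖((WithLp.equiv 2 (Fin d → ℂ)).symm (Aᴴ *ᵥ (t : Fin d → ℂ)))‖ ^ 2 / 4) *
        ∑' x : L, Real.exp (-‖(x : EuclideanSpace ℂ (Fin d))‖ ^ 2 / σ ^ 2) := by
  simpa only [re_star_dotProduct_mulVec] using discreteGaussian_mgf_bound_general L hσ.ne' _
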